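/- Kučera–Gács theorem: For every B ∈ 2^ω there is a Martin-Löf random A ∈ 2^ω with B ≤_T A; moreover (Gács) A can be chosen so that B ≤_wtt A, i.e. the reduction of B to A has oracle use bounded by a computable function. -/

import Mathlib

open scoped ENNReal NNReal Classical

namespace AR

/-- Elements of Cantor space `2^ω`: infinite binary sequences. -/
abbrev Seq := ℕ → Bool

/-- Finite binary strings `2^{<ω}`. -/
abbrev Str := List Bool

/-- The first `n` bits of a sequence `A`, as a finite string (`A↾n`). -/
def pre (A : Seq) (n : ℕ) : Str := List.ofFn fun i : Fin n => A i

/-- The basic clopen cylinder `[σ]` of all sequences extending `σ`. -/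
def cyl (σ : Str) : Set Seq := {A | pre A σ.length = σ}

/-- A measure on Cantor space is *fair-coin* if every cylinder `[σ]` has measure
`2^{-|σ|}`; this uniquely characterizes the usual product measure `μ` on `2^ω`. -/
def FairCoin (μ : MeasureTheory.Measure Seq) : Prop :=
  ∀ σ : Str, μ (cyl σ) = (2 : ℝ≥0∞)⁻¹ ^ σ.length

/-- A machine is a partial computable function `2^{<ω} ⇀ 2^{<ω}`. -/
def IsMachine (M : Str →. Str) : Prop := Partrec M

/-- Kolmogorov complexity of `τ` relative to the machine `M`:
`C_M(τ) = min{|σ| : M(σ)↓ = τ}`, with value `∞` if no such `σ` exists. -/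
noncomputable def Cplx (M : Str →. Str) (τ : Str) : ℕ∞ :=
  sInf ((fun σ : Str => (σ.length : ℕ∞)) '' {σ | τ ∈ M σ})

/-- A universal machine: a machine simulating every machine up to an additive
constant.  `Cplx U` for universal `U` is plain Kolmogorov complexity `C`. -/
def UniversalMachine (U : Str →. Str) : Prop :=
  IsMachine U ∧ ∀ M : Str →. Str, IsMachine M → ∃ c : ℕ, ∀ τ, Cplx U τ ≤ Cplx M τ + c

/-- A set of strings is prefix-free if none of its elements is a proper initial
segment of another. -/
def PrefixFree (S : Set Str) : Prop :=
  ∀ σ ∈ S, ∀ τ ∈ S, σ <+: τ → σ = τ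

/-- A prefix-free machine: a machine whose domain is prefix-free. -/
def PrefixFreeMachine (M : Str →. Str) : Prop :=
  IsMachine M ∧ PrefixFree {σ | (M σ).Dom}

/-- A universal prefix-free machine.  `Cplx U` for such `U` is prefix-free
Kolmogorov complexity `K`. -/
def UniversalPFMachine (U : Str →. Str) : Prop :=
  PrefixFreeMachine U ∧
    ∀ M : Str →. Str, PrefixFreeMachine M → ∃ c : ℕ, ∀ τ, Cplx U τ ≤ Cplx M τ + c

/-- A c.e. (recursively enumerable) predicate. -/
def CEPred {α} [Primcodable α] (p : α → Prop) : Prop :=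
  Partrec fun a => Part.assert (p a) fun _ => Part.some ()

/-- A Martin-Löf test: a sequence of uniformly Σ⁰₁ classes `U i`, given by a single
c.e. set `W` of pairs, with `μ (U i) ≤ 2^{-i}`. -/
def MLTest (μ : MeasureTheory.Measure Seq) (U : ℕ → Set Seq) : Prop :=
  ∃ W : Set (ℕ × Str), CEPred (· ∈ W) ∧
    (∀ i, U i = ⋃ σ ∈ {σ : Str | (i, σ) ∈ W}, cyl σ) ∧
    ∀ i, μ (U i) ≤ (2 : ℝ≥0∞)⁻¹ ^ i

/-- `A` is Martin-Löf random if it passes every Martin-Löf test. -/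
def MLRandom (μ : MeasureTheory.Measure Seq) (A : Seq) : Prop :=
  ∀ U : ℕ → Set Seq, MLTest μ U → A ∉ ⋂ i, U i

/-- Oracle partial recursion: `RecIn O f` means that the partial function
`f : ℕ ⇀ ℕ` is partial recursive relative to the oracle `O`
(Mathlib's `Nat.RecursiveIn`). -/
inductive RecIn (O : ℕ →. ℕ) : (ℕ →. ℕ) → Prop
  | zero : RecIn O (pure 0)
  | succ : RecIn O Nat.succ
  | left : RecIn O ↑fun n : ℕ => n.unpair.1
  | right : RecIn O ↑fun n : ℕ => n.unpair.2
  | oracle : RecIn O O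
  | pair {f g} : RecIn O f → RecIn O g → RecIn O fun n => Nat.pair <$> f n <*> g n
  | comp {f g} : RecIn O f → RecIn O g → RecIn O fun n => g n >>= f
  | prec {f g} : RecIn O f → RecIn O g → RecIn O (Nat.unpaired fun a n =>
      n.rec (f a) fun y IH => do let i ← IH; g (Nat.pair a (Nat.pair y i)))
  | rfind {f} : RecIn O f →
      RecIn O fun a => Nat.rfind fun n => (fun m => m = 0) <$> f (Nat.pair a n)

/-- The characteristic-function oracle associated to a sequence `A ∈ 2^ω`. -/
def oracleOf (A : Seq) : ℕ →. ℕ := fun n => Part.some (cond (A n) 1 0)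

/-- The characteristic-function oracle associated to a set of naturals. -/
noncomputable def oracleOfSet (S : Set ℕ) : ℕ →. ℕ :=
  fun n => Part.some (if n ∈ S then 1 else 0)

/-- Relative partial computability for partial functions between coded types. -/
def PartrecIn (O : ℕ →. ℕ) {α σ} [Primcodable α] [Primcodable σ] (f : α →. σ) : Prop :=
  RecIn O fun n =>
    Part.bind (Encodable.decode (α := α) n) fun a => (f a).map Encodable.encode

/-- A predicate is c.e. relative to the oracle `O`. -/
def CEPredIn (O : ℕ →. ℕ) {α} [Primcodable α] (p : α → Prop) : Prop :=
  PartrecIn O fun a => Part.assert (p a) fun _ => Part.some ()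

/-- Turing reducibility between oracles: `f` is recursive in `g`. -/
def TuringLE (f g : ℕ →. ℕ) : Prop := RecIn g f

/-- Turing reducibility `B ≤_T A` between sequences. -/
def SeqTuringLE (B A : Seq) : Prop := TuringLE (oracleOf B) (oracleOf A)

/-- The `e`-th partial computable function `φ_e`, via Mathlib's standard
enumeration of codes for the partial recursive functions. -/
def phi (e : ℕ) : ℕ →. ℕ := (Denumerable.ofNat Nat.Partrec.Code e).eval

/-- The halting problem `∅' = {e : φ_e(e)↓}`. -/
def haltingSet : Set ℕ := {e | (phi e e).Dom}

/-- A Martin-Löf test relative to the oracle `O`. -/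
def MLTestIn (O : ℕ →. ℕ) (μ : MeasureTheory.Measure Seq) (U : ℕ → Set Seq) : Prop :=
  ∃ W : Set (ℕ × Str), CEPredIn O (· ∈ W) ∧
    (∀ i, U i = ⋃ σ ∈ {σ : Str | (i, σ) ∈ W}, cyl σ) ∧
    ∀ i, μ (U i) ≤ (2 : ℝ≥0∞)⁻¹ ^ i

/-- Martin-Löf randomness relative to the oracle `O`. -/
def MLRandomIn (O : ℕ →. ℕ) (μ : MeasureTheory.Measure Seq) (A : Seq) : Prop :=
  ∀ U : ℕ → Set Seq, MLTestIn O μ U → A ∉ ⋂ i, U i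

/-! A universal Martin-Löf test provides a computable tree whose paths are all Martin-Löf random
and form a class `C` of positive measure. Call a string `σ` `m`-thick if `C` fills at least the
fraction `2^{-m}` of `[σ]`. By averaging, among the extensions of an `m`-thick string by `m + 2`
bits at least two are `(m + 1)`-thick, since otherwise `C` would fill at most the fraction
`2^{-(m+2)} + 2^{-(m+1)} < 2^{-m}` of `[σ]`. So a bit of `B` can be coded by moving to the first
or to the last of these thick extensions, and iterating this from a thick root yields a path `A`.

The lengths at which the bits are coded do not depend on `B`, which bounds the use computably. To
read a bit back, note that non-thickness is c.e., because the levels of the tree approximate `C`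
from above: wait until either all extensions before the one along `A` or all those after it have
been seen not to be thick. The first event occurs exactly for one value of the bit, the second
exactly for the other. -/

section Strings

/-- All binary strings of length `n`, as a list so that they can be enumerated primitive
recursively. -/
def strings : ℕ → List Str
  | 0 => [[]]
  | n + 1 => (strings n).map (List.cons false) ++ (strings n).map (List.cons true)

theorem mem_strings {n : ℕ} {ρ : Str} : ρ ∈ strings n ↔ ρ.length = n := by
  induction n generalizing ρ with
  | zero => simp [strings]
  | succ n ih => rcases ρ with _ | ⟨_ | _, ρ⟩ <;> simp [strings, ih]

theorem nodup_strings (n : ℕ) : (strings n).Nodup := by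
  induction n with
  | zero => simp [strings]
  | succ n ih =>
    refine (ih.map List.cons_injective).append (ih.map List.cons_injective) ?_
    simp [List.disjoint_left]

theorem length_strings (n : ℕ) : (strings n).length = 2 ^ n := by
  induction n with
  | zero => rfl
  | succ n ih => simp [strings, ih, pow_succ, mul_two]

/-- The level `2^n` of the binary tree: the finite set of all strings of length `n`. -/
def level (n : ℕ) : Finset Str := ⟨strings n, nodup_strings n⟩

@[simp]
theorem mem_level {n : ℕ} {ρ : Str} : ρ ∈ level n ↔ ρ.length = n := mem_strings

theorem card_level (n : ℕ) : (level n).card = 2 ^ n := length_strings n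

/-- The finite set of all extensions of `σ` by exactly `l` bits. -/
def extensions (σ : Str) (l : ℕ) : Finset Str := (level l).image (σ ++ ·)

theorem mem_extensions {σ τ : Str} {l : ℕ} :
    τ ∈ extensions σ l ↔ σ <+: τ ∧ τ.length = σ.length + l := by
  simp only [extensions, Finset.mem_image, mem_level]
  constructor
  · rintro ⟨ρ, rfl, rfl⟩
    exact ⟨List.prefix_append .., List.length_append⟩
  · rintro ⟨⟨ρ, rfl⟩, h⟩
    exact ⟨ρ, by simpa using h, rfl⟩

theorem card_extensions (σ : Str) (l : ℕ) : (extensions σ l).card = 2 ^ l := by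
  rw [extensions, Finset.card_image_of_injective _ (List.append_right_injective σ), card_level]

/-- The number of strings of length `n` that satisfy `p`. -/
noncomputable def count (p : Str → Prop) (n : ℕ) : ℕ := {ρ ∈ level n | p ρ}.card

end Strings

section InitialSegments

theorem length_pre (A : Seq) (n : ℕ) : (pre A n).length = n := List.length_ofFn

theorem pre_succ (A : Seq) (n : ℕ) : pre A (n + 1) = pre A n ++ [A n] := by
  rw [pre, List.ofFn_succ']
  simp [pre, List.concat_eq_append]

theorem take_pre (A : Seq) {m n : ℕ} (h : m ≤ n) : (pre A n).take m = pre A m :=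
  List.ext_getElem (by simp [pre, h]) fun i _ _ => by simp [pre]

theorem pre_prefix_pre (A : Seq) {m n : ℕ} (h : m ≤ n) : pre A m <+: pre A n :=
  take_pre A h ▸ List.take_prefix m (pre A n)

theorem mem_cyl_iff_prefix {A : Seq} {σ : Str} {n : ℕ} (h : σ.length ≤ n) :
    A ∈ cyl σ ↔ σ <+: pre A n := by
  rw [List.prefix_iff_eq_take, take_pre A h, eq_comm]
  rfl

theorem exists_forall_mem_cyl {σ : ℕ → Str} (hσ : ∀ n, σ n <+: σ (n + 1))
    (hlen : ∀ n, n ≤ (σ n).length) : ∃ A : Seq, ∀ n, A ∈ cyl (σ n) := by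
  have hmono {m n : ℕ} (h : m ≤ n) : σ m <+: σ n := Nat.rel_of_forall_rel_succ_of_le _ hσ h
  refine ⟨fun i => (σ (i + 1)).getD i false, fun n => ?_⟩
  refine List.ext_getElem (length_pre _ _) fun i _ hn => ?_
  have hi : i < (σ (i + 1)).length := hlen (i + 1)
  simp only [pre, List.getElem_ofFn, List.getD_eq_getElem _ _ hi]
  rcases le_total (i + 1) n with h | h
  · exact (hmono h).getElem hi
  · exact ((hmono h).getElem hn).symm

end InitialSegments

section Measure

open MeasureTheory

theorem measurableSet_cyl (σ : Str) : MeasurableSet (cyl σ) := by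
  have h : cyl σ = ⋂ i : Fin σ.length, (fun A : Seq => A i) ⁻¹' {σ[i]} := by
    ext A
    simp [cyl, pre, List.ext_getElem_iff, Fin.forall_iff]
  rw [h]
  exact .iInter fun i => measurable_pi_apply (i : ℕ) (measurableSet_singleton _)

theorem pairwiseDisjoint_cyl_level (n : ℕ) : (level n : Set Str).PairwiseDisjoint cyl := by
  intro ρ hρ τ hτ hne
  refine Set.disjoint_left.2 fun A hAρ hAτ => hne ?_
  rw [Finset.mem_coe, mem_level] at hρ hτ
  rw [← show pre A ρ.length = ρ from hAρ, ← show pre A τ.length = τ from hAτ, hρ, hτ]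

theorem setOf_pre_eq_biUnion (p : Str → Prop) (n : ℕ) :
    {A | p (pre A n)} = ⋃ ρ ∈ ({ρ ∈ level n | p ρ} : Finset Str), cyl ρ := by
  ext A
  simp only [Set.mem_ofPred_eq, Set.mem_iUnion, Finset.mem_filter, mem_level, exists_prop]
  constructor
  · exact fun h => ⟨pre A n, ⟨length_pre A n, h⟩, congrArg (pre A) (length_pre A n)⟩
  · rintro ⟨ρ, ⟨rfl, hp⟩, hA⟩
    rwa [show pre A ρ.length = ρ from hA]

theorem measurableSet_setOf_pre (p : Str → Prop) (n : ℕ) : MeasurableSet {A | p (pre A n)} := by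
  rw [setOf_pre_eq_biUnion]
  exact Finset.measurableSet_biUnion _ fun ρ _ => measurableSet_cyl ρ

theorem measure_biUnion_measure_lt_le {α ι : Type*} [MeasurableSpace α] [LinearOrder ι]
    [Countable ι] (μ : Measure α) {s : ι → Set α} (hs : Monotone s) (ε : ℝ≥0∞) :
    μ (⋃ i ∈ {i | μ (s i) < ε}, s i) ≤ ε := by
  have hdir : DirectedOn (Function.onFun (· ⊆ ·) s) {i | μ (s i) < ε} := fun i hi j hj => by
    rcases le_total i j with h | h
    · exact ⟨j, hj, hs h, subset_rfl⟩
    · exact ⟨i, hi, subset_rfl, hs h⟩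
  rw [measure_biUnion_eq_iSup (Set.to_countable _) hdir]
  exact iSup₂_le fun i hi => le_of_lt hi

namespace FairCoin

variable {μ : Measure Seq}

theorem isProbabilityMeasure (hμ : FairCoin μ) : IsProbabilityMeasure μ :=
  ⟨by simpa [cyl, pre] using hμ []⟩

theorem measure_setOf_pre (hμ : FairCoin μ) (p : Str → Prop) (n : ℕ) :
    μ {A | p (pre A n)} = count p n * (2 : ℝ≥0∞)⁻¹ ^ n := by
  have hdisj := (pairwiseDisjoint_cyl_level n).subset
    (Finset.coe_subset.2 (Finset.filter_subset p (level n)))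
  rw [setOf_pre_eq_biUnion, measure_biUnion_finset hdisj fun ρ _ => measurableSet_cyl ρ]
  rw [count, ← nsmul_eq_mul, ← Finset.sum_const]
  refine Finset.sum_congr rfl fun ρ hρ => ?_
  rw [hμ, mem_level.1 (Finset.mem_filter.1 hρ).1]

theorem measure_setOf_pre_lt_iff (hμ : FairCoin μ) (p : Str → Prop) (n m : ℕ) :
    μ {A | p (pre A n)} < (2 : ℝ≥0∞)⁻¹ ^ m ↔ count p n * 2 ^ m < 2 ^ n := by
  rw [hμ.measure_setOf_pre, ← ENNReal.inv_pow, ← ENNReal.inv_pow, ← div_eq_mul_inv,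
    ENNReal.div_lt_iff (by simp) (by simp), mul_comm, ← div_eq_mul_inv,
    ENNReal.lt_div_iff_mul_lt (by simp) (by simp)]
  exact_mod_cast Iff.rfl

end FairCoin

end Measure

section PrimitiveRecursion

variable {α : Type*} [Primcodable α]

theorem primrecPred_exists_lt {R : ℕ → α → Prop} (hR : PrimrecRel R) {n : α → ℕ}
    (hn : Primrec n) : PrimrecPred fun a => ∃ k < n a, R k a :=
  (hR.exists_mem_list.comp (Primrec.list_range.comp hn) Primrec.id).of_eq fun a => by simp

theorem primrecPred_forall_lt {R : ℕ → α → Prop} (hR : PrimrecRel R) {n : α → ℕ}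
    (hn : Primrec n) : PrimrecPred fun a => ∀ k < n a, R k a :=
  (hR.forall_mem_list.comp (Primrec.list_range.comp hn) Primrec.id).of_eq fun a => by simp

theorem primrec_strings : Primrec strings := by
  have hstep : Primrec₂ fun (_ : ℕ) (L : List Str) =>
      L.map (List.cons false) ++ L.map (List.cons true) := by
    refine Primrec.list_append.comp ?_ ?_ <;>
    exact Primrec.list_map Primrec.snd
      (Primrec.list_cons.comp (Primrec.const _) Primrec.snd).to₂
  refine (Primrec.nat_rec₁ [[]] hstep).of_eq fun n => ?_
  induction n with
  | zero => rfl
  | succ n ih => simp only [ih, strings]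

theorem primrec_count {R : α → Str → Prop} (hR : PrimrecRel R) {n : α → ℕ} (hn : Primrec n) :
    Primrec fun a => count (R a) (n a) :=
  Primrec.list_length.comp (hR.swap.listFilter.comp (primrec_strings.comp hn) Primrec.id)

theorem primrecPred_forall_length {R : α → Str → Prop} (hR : PrimrecRel R) {n : α → ℕ}
    (hn : Primrec n) : PrimrecPred fun a => ∀ ρ : Str, ρ.length = n a → R a ρ :=
  (hR.swap.forall_mem_list.comp (primrec_strings.comp hn) Primrec.id).of_eq fun a => by
    simp [mem_strings, Function.swap]

theorem primrecRel_prefix : PrimrecRel fun σ τ : Str => σ <+: τ :=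
  (Primrec.eq.comp Primrec.fst (Primrec.list_take.comp (Primrec.list_length.comp Primrec.fst)
    Primrec.snd)).of_eq fun _ => List.prefix_iff_eq_take.symm

theorem primrec_two_pow : Primrec fun n : ℕ => 2 ^ n :=
  (Primrec₂.unpaired'.1 Nat.Primrec.pow).comp (Primrec.const 2) Primrec.id

theorem FairCoin.primrecPred_measure_lt {μ : MeasureTheory.Measure Seq} (hμ : FairCoin μ)
    {R : α → Str → Prop} (hR : PrimrecRel R) {n m : α → ℕ} (hn : Primrec n) (hm : Primrec m) :
    PrimrecPred fun a => μ {A | R a (pre A (n a))} < (2 : ℝ≥0∞)⁻¹ ^ m a :=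
  (Primrec.nat_lt.comp
    (Primrec.nat_mul.comp (primrec_count hR hn) (primrec_two_pow.comp hm))
    (primrec_two_pow.comp hn)).of_eq fun a => (hμ.measure_setOf_pre_lt_iff (R a) _ _).symm

end PrimitiveRecursion

section Trees

open Descriptive

/-- The closed set of infinite paths through the binary tree `T`; for a computable `T` this is a
`Π⁰₁` class. -/
def paths (T : tree Bool) : Set Seq := {A | ∀ n, pre A n ∈ T}

theorem antitone_setOf_pre_mem (T : tree Bool) : Antitone fun n => {A | pre A n ∈ T} :=
  fun _ _ h A hA => Tree.mem_of_prefix (pre_prefix_pre A h) hA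

theorem paths_eq_iInter (T : tree Bool) : paths T = ⋂ n, {A | pre A n ∈ T} := by
  ext A
  simp [paths]

end Trees

section UniversalTest

open MeasureTheory Descriptive Nat.Partrec

theorem CEPred.exists_phi {α : Type*} [Primcodable α] {p : α → Prop} (hp : CEPred p) :
    ∃ e, ∀ a, (phi e (Encodable.encode a)).Dom ↔ p a := by
  obtain ⟨c, hc⟩ := Code.exists_code.1 hp
  refine ⟨Encodable.encode c, fun a => ?_⟩
  rw [phi, Denumerable.ofNat_encode, hc]
  simp [Part.assert]

/-- Within `|ρ|` steps, some initial segment of `ρ` is enumerated into the `i`-th component of the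
`e`-th c.e. set of pairs. -/
def Covered (e i : ℕ) (ρ : Str) : Prop :=
  ∃ j < ρ.length + 1, (Code.evaln ρ.length (Denumerable.ofNat Code e)
    (Encodable.encode (i, ρ.take j))).isSome

theorem Covered.mono {e i : ℕ} {σ τ : Str} (h : σ <+: τ) (hσ : Covered e i σ) :
    Covered e i τ := by
  obtain ⟨j, hj, hs⟩ := hσ
  have hl := h.length_le
  obtain ⟨x, hx⟩ := Option.isSome_iff_exists.1 hs
  have ht : τ.take j = σ.take j := by
    obtain ⟨ρ, rfl⟩ := h
    rw [List.take_append_of_le_length (by omega)]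
  refine ⟨j, by omega, Option.isSome_iff_exists.2 ⟨x, ?_⟩⟩
  rw [ht]
  exact Code.evaln_mono hl hx

theorem primrecRel_covered : PrimrecRel fun p : ℕ × ℕ => Covered p.1 p.2 := by
  have h : PrimrecRel fun (j : ℕ) (q : (ℕ × ℕ) × Str) =>
      (Code.evaln q.2.length (Denumerable.ofNat Code q.1.1)
        (Encodable.encode (q.1.2, q.2.take j))).isSome = true := by
    have hρ : Primrec fun q : ℕ × (ℕ × ℕ) × Str => q.2.2 := Primrec.snd.comp Primrec.snd
    have hp : Primrec fun q : ℕ × (ℕ × ℕ) × Str => q.2.1 := Primrec.fst.comp Primrec.snd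
    have hcode : Primrec fun q : ℕ × (ℕ × ℕ) × Str => Denumerable.ofNat Code q.2.1.1 :=
      (Primrec.ofNat _).comp (Primrec.fst.comp hp)
    have hinput : Primrec fun q : ℕ × (ℕ × ℕ) × Str =>
        Encodable.encode (q.2.1.2, q.2.2.take q.1) :=
      Primrec.encode.comp ((Primrec.snd.comp hp).pair (Primrec.list_take.comp Primrec.fst hρ))
    exact Primrec.eq.comp (Primrec.option_isSome.comp (Code.primrec_evaln.comp
      (((Primrec.list_length.comp hρ).pair hcode).pair hinput))) (Primrec.const true)
  exact primrecPred_exists_lt h (Primrec.succ.comp (Primrec.list_length.comp Primrec.snd))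

/-- The clopen approximation, after `s` steps, to the `i`-th component of the `e`-th c.e. set of
pairs, read as a sequence of `Σ⁰₁` classes. -/
def stage (e i s : ℕ) : Set Seq := {A | Covered e i (pre A s)}

theorem monotone_stage (e i : ℕ) : Monotone (stage e i) :=
  fun _ _ h A hA => Covered.mono (pre_prefix_pre A h) hA

theorem iUnion_stage {e : ℕ} {W : Set (ℕ × Str)}
    (he : ∀ a, (phi e (Encodable.encode a)).Dom ↔ a ∈ W) (i : ℕ) :
    ⋃ s, stage e i s = ⋃ σ ∈ {σ : Str | (i, σ) ∈ W}, cyl σ := by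
  ext A
  simp only [Set.mem_iUnion, Set.mem_ofPred_eq, exists_prop, ← he, Part.dom_iff_mem]
  constructor
  · rintro ⟨s, j, hj, hs⟩
    obtain ⟨x, hx⟩ := Option.isSome_iff_exists.1 hs
    rw [length_pre] at hj
    rw [take_pre A (by omega)] at hx
    exact ⟨pre A j, ⟨x, Code.evaln_sound hx⟩, congrArg (pre A) (length_pre A j)⟩
  · rintro ⟨σ, ⟨x, hx⟩, hA⟩
    obtain ⟨k, hk⟩ := Code.evaln_complete.1 hx
    refine ⟨k + σ.length, σ.length, by rw [length_pre]; omega, ?_⟩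
    rw [take_pre A (by omega), show pre A σ.length = σ from hA, length_pre]
    exact Option.isSome_iff_exists.2 ⟨x, Code.evaln_mono (by omega) hk⟩

/-- A computable tree all of whose paths are Martin-Löf random: for each `e` it avoids the stages
of component `e + 3` of the `e`-th c.e. set as long as their measure is below `2^{-(e+2)}`. The
factor `2` between this threshold and the bound `2^{-(e+3)}` of a Martin-Löf test makes the strict
inequality harmless. -/
def randomTree (μ : Measure Seq) : tree Bool where
  val := {ρ | ∀ e < ρ.length, ∀ s < ρ.length + 1,
    μ (stage e (e + 3) s) < 2⁻¹ ^ (e + 2) → ¬Covered e (e + 3) (ρ.take s)}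
  property ρ a h e he s hs := by
    have := h e (by rw [List.length_append]; omega) s (by rw [List.length_append]; omega)
    rwa [List.take_append_of_le_length (by omega)] at this

variable {μ : Measure Seq}

theorem primrecPred_mem_randomTree (hμ : FairCoin μ) : PrimrecPred (· ∈ randomTree μ) := by
  have hsmall : PrimrecRel fun s e => μ (stage e (e + 3) s) < 2⁻¹ ^ (e + 2) := by
    have he : Primrec fun q : (ℕ × ℕ) × Str => q.1.2 := Primrec.snd.comp Primrec.fst
    refine hμ.primrecPred_measure_lt (R := fun (q : ℕ × ℕ) ρ => Covered q.2 (q.2 + 3) ρ)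
      ?_ Primrec.fst (Primrec.nat_add.comp Primrec.snd (Primrec.const 2))
    exact primrecRel_covered.comp
      (he.pair (Primrec.nat_add.comp he (Primrec.const 3))) Primrec.snd
  have havoid : PrimrecRel fun s (q : ℕ × Str) =>
      μ (stage q.1 (q.1 + 3) s) < 2⁻¹ ^ (q.1 + 2) → ¬Covered q.1 (q.1 + 3) (q.2.take s) := by
    have he : Primrec fun q : ℕ × ℕ × Str => q.2.1 := Primrec.fst.comp Primrec.snd
    refine ((hsmall.comp Primrec.fst he).not.or (primrecRel_covered.comp
      (he.pair (Primrec.nat_add.comp he (Primrec.const 3)))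
      (Primrec.list_take.comp Primrec.fst (Primrec.snd.comp Primrec.snd))).not).of_eq
      fun q => imp_iff_not_or.symm
  have hforall : PrimrecRel fun e (ρ : Str) => ∀ s < ρ.length + 1,
      μ (stage e (e + 3) s) < 2⁻¹ ^ (e + 2) → ¬Covered e (e + 3) (ρ.take s) :=
    primrecPred_forall_lt havoid (Primrec.succ.comp (Primrec.list_length.comp Primrec.snd))
  exact primrecPred_forall_lt hforall Primrec.list_length

theorem compl_paths_randomTree_subset (μ : Measure Seq) :
    (paths (randomTree μ))ᶜ ⊆
      ⋃ e, ⋃ s ∈ {s | μ (stage e (e + 3) s) < 2⁻¹ ^ (e + 2)}, stage e (e + 3) s := by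
  intro A hA
  obtain ⟨n, hn⟩ := not_forall.1 hA
  obtain ⟨e, -, s, hs, hlt, hcov⟩ : ∃ e < (pre A n).length, ∃ s < (pre A n).length + 1,
      μ (stage e (e + 3) s) < 2⁻¹ ^ (e + 2) ∧ Covered e (e + 3) ((pre A n).take s) := by
    simpa [randomTree] using hn
  rw [length_pre] at hs
  rw [take_pre A (by omega)] at hcov
  exact Set.mem_iUnion.2 ⟨e, Set.mem_biUnion hlt hcov⟩

theorem measure_paths_randomTree_ne_zero [IsProbabilityMeasure μ] :
    μ (paths (randomTree μ)) ≠ 0 := by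
  have hcompl : μ (paths (randomTree μ))ᶜ ≤ 2⁻¹ := calc
    _ ≤ ∑' e : ℕ, (2⁻¹ : ℝ≥0∞) ^ (e + 2) :=
      (measure_mono (compl_paths_randomTree_subset μ)).trans <| (measure_iUnion_le _).trans <|
        ENNReal.tsum_le_tsum fun e => measure_biUnion_measure_lt_le μ (monotone_stage e (e + 3)) _
    _ = 2⁻¹ := by
      simp_rw [pow_add, ENNReal.tsum_mul_right]
      rw [ENNReal.tsum_geometric, ENNReal.one_sub_inv_two, inv_inv, sq, ← mul_assoc,
        ENNReal.mul_inv_cancel two_ne_zero ENNReal.ofNat_ne_top, one_mul]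
  intro h
  have huniv := (measure_univ_le_add_compl (μ := μ) (paths (randomTree μ))).trans
    (add_le_add h.le hcompl)
  rw [measure_univ, zero_add] at huniv
  exact huniv.not_gt ENNReal.one_half_lt_one

theorem mlRandom_of_mem_paths_randomTree {A : Seq} (hA : A ∈ paths (randomTree μ)) :
    MLRandom μ A := by
  rintro U ⟨W, hW, hU, hm⟩ hAU
  obtain ⟨e, he⟩ := hW.exists_phi
  have hUe : U (e + 3) = ⋃ s, stage e (e + 3) s := by rw [hU, iUnion_stage he]
  obtain ⟨s, hs⟩ := Set.mem_iUnion.1 (hUe ▸ Set.mem_iInter.1 hAU (e + 3))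
  set n := max s (e + 1)
  have hsmall : μ (stage e (e + 3) n) < 2⁻¹ ^ (e + 2) := calc
    _ ≤ (2⁻¹ : ℝ≥0∞) ^ (e + 3) := (measure_mono (hUe ▸ Set.subset_iUnion _ n)).trans (hm _)
    _ < 2⁻¹ ^ (e + 2) := by
      rw [← ENNReal.inv_pow, ← ENNReal.inv_pow, ENNReal.inv_lt_inv]
      exact_mod_cast Nat.pow_lt_pow_right one_lt_two (Nat.lt_succ_self _)
  refine hA n e (by rw [length_pre]; omega) n (by rw [length_pre]; omega) hsmall ?_
  rw [take_pre A le_rfl]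
  exact monotone_stage e (e + 3) (le_max_left s (e + 1)) hs

end UniversalTest

section Thickness

open MeasureTheory Descriptive

theorem two_mul_inv_two_pow_succ (n : ℕ) : 2 * (2⁻¹ : ℝ≥0∞) ^ (n + 1) = 2⁻¹ ^ n := by
  rw [pow_succ', ← mul_assoc, ENNReal.mul_inv_cancel two_ne_zero ENNReal.ofNat_ne_top, one_mul]

/-- The string `σ` is `m`-thick if at least the fraction `2^{-m}` of `[σ]` lies in `C`. -/
def Thick (μ : Measure Seq) (C : Set Seq) (m : ℕ) (σ : Str) : Prop :=
  2⁻¹ ^ (σ.length + m) ≤ μ (cyl σ ∩ C)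

/-- The tree `T` witnesses at its level `k` that `σ` is not `m`-thick for `paths T`. -/
def ThinAt (μ : Measure Seq) (T : tree Bool) (m : ℕ) (σ : Str) (k : ℕ) : Prop :=
  μ (cyl σ ∩ {A | pre A k ∈ T}) < 2⁻¹ ^ (σ.length + m)

/-- The thick extensions of an `m`-thick string among which one bit gets coded. Passing from
fraction `2^{-m}` to `2^{-(m+1)}` over `m + 2` further bits leaves at least two of them. -/
noncomputable def thickExtensions (μ : Measure Seq) (C : Set Seq) (m : ℕ) (σ : Str) : Finset Str :=
  {τ ∈ extensions σ (m + 2) | Thick μ C (m + 1) τ}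

variable {μ : Measure Seq} {C : Set Seq} {T : tree Bool} {m : ℕ} {σ : Str}

theorem Thick.inter_nonempty (h : Thick μ C m σ) : (cyl σ ∩ C).Nonempty :=
  nonempty_of_measure_ne_zero ((ENNReal.pow_pos (by simp) _).trans_le h).ne'

theorem exists_thick_nil (hC : μ C ≠ 0) : ∃ c, Thick μ C c [] := by
  obtain ⟨c, hc⟩ := ENNReal.exists_inv_two_pow_lt hC
  exact ⟨c, by simpa [Thick, cyl, pre] using hc.le⟩

theorem cyl_subset_biUnion_extensions (σ : Str) (l : ℕ) :
    cyl σ ⊆ ⋃ τ ∈ extensions σ l, cyl τ := by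
  intro A hA
  refine Set.mem_biUnion (x := pre A (σ.length + l)) (mem_extensions.2 ⟨?_, length_pre _ _⟩)
    (congrArg (pre A) (length_pre _ _))
  exact (mem_cyl_iff_prefix (Nat.le_add_right _ l)).1 hA

theorem FairCoin.measure_cyl_inter_le (hμ : FairCoin μ) (C : Set Seq) (σ : Str) (l m : ℕ) :
    μ (cyl σ ∩ C) ≤ ({τ ∈ extensions σ l | Thick μ C m τ} : Finset Str).card *
      2⁻¹ ^ (σ.length + l) + 2⁻¹ ^ (σ.length + m) := by
  have hterm : ∀ τ ∈ extensions σ l, μ (cyl τ ∩ C) ≤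
      (if Thick μ C m τ then 2⁻¹ ^ (σ.length + l) else 0) + 2⁻¹ ^ (σ.length + l + m) := by
    intro τ hτ
    rw [← (mem_extensions.1 hτ).2]
    split_ifs with h
    · exact (measure_mono Set.inter_subset_left).trans ((hμ τ).le.trans le_self_add)
    · exact (not_le.1 h).le.trans le_add_self
  calc μ (cyl σ ∩ C)
    _ ≤ μ (⋃ τ ∈ extensions σ l, cyl τ ∩ C) := by
      rw [← Set.iUnion₂_inter]
      exact measure_mono (Set.inter_subset_inter_left C (cyl_subset_biUnion_extensions σ l))
    _ ≤ ∑ τ ∈ extensions σ l, μ (cyl τ ∩ C) := measure_biUnion_finset_le _ _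
    _ ≤ _ := Finset.sum_le_sum hterm
    _ = _ := by
      rw [Finset.sum_add_distrib, ← Finset.sum_filter, Finset.sum_const, Finset.sum_const,
        nsmul_eq_mul, nsmul_eq_mul, card_extensions, Nat.cast_pow, Nat.cast_ofNat, add_assoc,
        add_left_comm σ.length, pow_add _ l, ← mul_assoc, ← mul_pow,
        ENNReal.mul_inv_cancel two_ne_zero ENNReal.ofNat_ne_top, one_pow, one_mul]

theorem Thick.nontrivial_thickExtensions (hμ : FairCoin μ) (h : Thick μ C m σ) :
    (thickExtensions μ C m σ).Nontrivial := by
  set x : ℝ≥0∞ := 2⁻¹ ^ (σ.length + (m + 2)) with hx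
  have hx₁ : 2⁻¹ ^ (σ.length + (m + 1)) = 2 * x := (two_mul_inv_two_pow_succ _).symm
  have hx₀ : 2⁻¹ ^ (σ.length + m) = 4 * x := by
    rw [← two_mul_inv_two_pow_succ, add_assoc, hx₁, ← mul_assoc]
    norm_num
  have hcount : 4 * x ≤ ((thickExtensions μ C m σ).card + 2) * x := by
    rw [← hx₀, add_mul, ← hx₁]
    exact h.trans (hμ.measure_cyl_inter_le C σ (m + 2) (m + 1))
  rw [ENNReal.mul_le_mul_iff_left (by simp [hx]) (by simp [hx])] at hcount
  have : 4 ≤ (thickExtensions μ C m σ).card + 2 := by exact_mod_cast hcount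
  exact Finset.one_lt_card_iff_nontrivial.1 (by omega)

theorem not_thick_paths_iff [IsFiniteMeasure μ] :
    ¬Thick μ (paths T) m σ ↔ ∃ k, ThinAt μ T m σ k := by
  have hanti : Antitone fun k => cyl σ ∩ {A | pre A k ∈ T} := fun _ _ h =>
    Set.inter_subset_inter_right _ (antitone_setOf_pre_mem T h)
  rw [Thick, not_le, paths_eq_iInter, Set.inter_iInter, hanti.measure_iInter
    (fun k => ((measurableSet_cyl σ).inter (measurableSet_setOf_pre _ k)).nullMeasurableSet)
    ⟨0, measure_ne_top μ _⟩, iInf_lt_iff]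
  rfl

theorem ThinAt.mono {k l : ℕ} (hkl : k ≤ l) (h : ThinAt μ T m σ k) : ThinAt μ T m σ l :=
  (measure_mono (Set.inter_subset_inter_right _ (antitone_setOf_pre_mem T hkl))).trans_lt h

theorem primrecPred_thinAt {α : Type*} [Primcodable α] (hμ : FairCoin μ)
    (hT : PrimrecPred (· ∈ T)) {m k : α → ℕ} {σ : α → Str} (hm : Primrec m) (hσ : Primrec σ)
    (hk : Primrec k) : PrimrecPred fun a => ThinAt μ T (m a) (σ a) (k a) := by
  have hlen : Primrec fun a => (σ a).length := Primrec.list_length.comp hσ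
  have hevent : PrimrecRel fun a ρ => σ a <+: ρ ∧ ρ.take (k a) ∈ T :=
    (primrecRel_prefix.comp (hσ.comp Primrec.fst) Primrec.snd).and
      (hT.comp (Primrec.list_take.comp (hk.comp Primrec.fst) Primrec.snd))
  refine (hμ.primrecPred_measure_lt hevent (Primrec.nat_add.comp hlen hk)
    (Primrec.nat_add.comp hlen hm)).of_eq fun a => ?_
  have hset : cyl (σ a) ∩ {A | pre A (k a) ∈ T} = {A | σ a <+: pre A ((σ a).length + k a) ∧
      (pre A ((σ a).length + k a)).take (k a) ∈ T} := by
    ext A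
    rw [Set.mem_inter_iff, mem_cyl_iff_prefix (Nat.le_add_right _ (k a))]
    simp only [Set.mem_ofPred_eq, take_pre A (Nat.le_add_left (k a) _)]
  rw [ThinAt, hset]

end Thickness

section Coding

open MeasureTheory Descriptive

/-- The position of a string in an effective linear order of all strings, negated for `b = true`,
so that minimizing `rank b` selects the first string if `b = false` and the last if `b = true`. -/
def rank (b : Bool) (ρ : Str) : ℤ :=
  bif b then -Encodable.encode ρ else Encodable.encode ρ

theorem rank_injective (b : Bool) : Function.Injective (rank b) := by
  intro ρ τ h
  cases b <;> simpa [rank] using h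

theorem rank_not (b : Bool) (ρ : Str) : rank (!b) ρ = -rank b ρ := by
  cases b <;> simp [rank]

theorem primrecRel_rank_lt (b : Bool) : PrimrecRel fun ρ τ => rank b ρ < rank b τ := by
  have h : PrimrecRel fun ρ τ : Str => Encodable.encode ρ < Encodable.encode τ :=
    Primrec.nat_lt.comp (Primrec.encode.comp Primrec.fst) (Primrec.encode.comp Primrec.snd)
  cases b
  · exact h.of_eq fun _ _ => by simp [rank]
  · exact h.swap.of_eq fun _ _ => by simp [rank, Function.swap]

/-- The string `τ` codes the bit `b` over the `m`-thick string `σ`: among the thick extensions of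
`σ` it is the first one if `b = false` and the last one if `b = true`. -/
def Codes (μ : Measure Seq) (C : Set Seq) (m : ℕ) (b : Bool) (σ τ : Str) : Prop :=
  τ ∈ thickExtensions μ C m σ ∧ ∀ ρ ∈ thickExtensions μ C m σ, rank b τ ≤ rank b ρ

/-- At level `k` the tree `T` witnesses that no extension of `σ` ranked before `τ` is thick; this
is how a decoder recognizes that `τ` codes `b` over `σ`. -/
def Settled (μ : Measure Seq) (T : tree Bool) (m : ℕ) (b : Bool) (σ τ : Str) (k : ℕ) : Prop :=
  ∀ ρ ∈ extensions σ (m + 2), rank b ρ < rank b τ → ThinAt μ T (m + 1) ρ k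

variable {μ : Measure Seq} {C : Set Seq} {T : tree Bool} {m : ℕ} {b : Bool} {σ τ : Str}

theorem Thick.exists_codes (hμ : FairCoin μ) (h : Thick μ C m σ) (b : Bool) :
    ∃ τ, Codes μ C m b σ τ :=
  Finset.exists_min_image _ (rank b) (h.nontrivial_thickExtensions hμ).nonempty

theorem Codes.mem_extensions (h : Codes μ C m b σ τ) : τ ∈ extensions σ (m + 2) :=
  (Finset.mem_filter.1 h.1).1

theorem Codes.thick (h : Codes μ C m b σ τ) : Thick μ C (m + 1) τ := (Finset.mem_filter.1 h.1).2

theorem Codes.exists_settled [IsFiniteMeasure μ] (h : Codes μ (paths T) m b σ τ) :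
    ∃ k, Settled μ T m b σ τ k := by
  have hthin : ∀ ρ ∈ extensions σ (m + 2), rank b ρ < rank b τ → ∃ k, ThinAt μ T (m + 1) ρ k :=
    fun ρ hρ hlt => not_thick_paths_iff.1 fun hthick =>
      (h.2 ρ (Finset.mem_filter.2 ⟨hρ, hthick⟩)).not_gt hlt
  choose! k hk using hthin
  exact ⟨(extensions σ (m + 2)).sup k, fun ρ hρ hlt => (hk ρ hρ hlt).mono (Finset.le_sup hρ)⟩

theorem Codes.not_settled_not (hμ : FairCoin μ)
    (hσ : Thick μ (paths T) m σ) (h : Codes μ (paths T) m b σ τ) (k : ℕ) :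
    ¬Settled μ T m (!b) σ τ k := by
  have := hμ.isProbabilityMeasure
  intro hk
  obtain ⟨ρ, hρ, hne⟩ := (hσ.nontrivial_thickExtensions hμ).exists_ne τ
  obtain ⟨hext, hthick⟩ := Finset.mem_filter.1 hρ
  have hlt : rank b τ < rank b ρ := (h.2 ρ hρ).lt_of_ne ((rank_injective b).ne hne.symm)
  refine not_thick_paths_iff.2 ⟨k, hk ρ hext ?_⟩ hthick
  rwa [rank_not, rank_not, neg_lt_neg_iff]

theorem primrecPred_settled {α : Type*} [Primcodable α] (hμ : FairCoin μ)
    (hT : PrimrecPred (· ∈ T)) (b : Bool) {m k : α → ℕ} {σ τ : α → Str} (hm : Primrec m)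
    (hσ : Primrec σ) (hτ : Primrec τ) (hk : Primrec k) :
    PrimrecPred fun a => Settled μ T (m a) b (σ a) (τ a) (k a) := by
  have hprefix : PrimrecRel fun a ρ => σ a <+: ρ :=
    primrecRel_prefix.comp (hσ.comp Primrec.fst) Primrec.snd
  have hrank : PrimrecRel fun a ρ => rank b ρ < rank b (τ a) :=
    (primrecRel_rank_lt b).comp Primrec.snd (hτ.comp Primrec.fst)
  have hthin : PrimrecRel fun a ρ => ThinAt μ T (m a + 1) ρ (k a) :=
    primrecPred_thinAt hμ hT (Primrec.succ.comp (hm.comp Primrec.fst)) Primrec.snd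
      (hk.comp Primrec.fst)
  have hbody : PrimrecRel fun a ρ =>
      σ a <+: ρ → rank b ρ < rank b (τ a) → ThinAt μ T (m a + 1) ρ (k a) :=
    (hprefix.not.or (hrank.not.or hthin)).of_eq fun _ => by tauto
  refine (primrecPred_forall_length hbody (Primrec.nat_add.comp (Primrec.list_length.comp hσ)
    (Primrec.nat_add.comp hm (Primrec.const 2)))).of_eq fun a => forall_congr' fun ρ => ?_
  rw [mem_extensions]
  tauto

/-- The length of the string that codes the first `n` bits, starting from a root of thickness `c`
and coding the `n`-th bit over a `(c + n)`-thick string. -/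
def codeLength (c : ℕ) : ℕ → ℕ
  | 0 => 0
  | n + 1 => codeLength c n + (c + n + 2)

theorem primrec_codeLength (c : ℕ) : Primrec (codeLength c) := by
  have hstep : Primrec₂ fun n l : ℕ => l + (c + n + 2) :=
    Primrec.nat_add.comp Primrec.snd (Primrec.nat_add.comp
      (Primrec.nat_add.comp (Primrec.const c) Primrec.fst) (Primrec.const 2))
  refine (Primrec.nat_rec₁ 0 hstep).of_eq fun n => ?_
  induction n with
  | zero => rfl
  | succ n ih => simp only [ih, codeLength]

theorem le_codeLength (c n : ℕ) : n ≤ codeLength c n := by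
  induction n with
  | zero => rfl
  | succ n ih => rw [codeLength]; omega

theorem exists_seq_codes (hμ : FairCoin μ) {c : ℕ} (hc : Thick μ C c []) (B : Seq) :
    ∃ A : Seq, ∀ n, Thick μ C (c + n) (pre A (codeLength c n)) ∧
      Codes μ C (c + n) (B n) (pre A (codeLength c n)) (pre A (codeLength c (n + 1))) := by
  have hstep : ∀ n σ, Thick μ C (c + n) σ → ∃ τ, Codes μ C (c + n) (B n) σ τ :=
    fun n σ h => h.exists_codes hμ (B n)
  choose! next hnext using hstep
  let σ : ℕ → Str := Nat.rec [] next
  have hthick (n : ℕ) : Thick μ C (c + n) (σ n) := by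
    induction n with
    | zero => exact hc
    | succ n ih => exact (hnext n _ ih).thick
  have hcodes (n : ℕ) : Codes μ C (c + n) (B n) (σ n) (σ (n + 1)) := hnext n _ (hthick n)
  have hext (n : ℕ) := AR.mem_extensions.1 (hcodes n).mem_extensions
  have hlen (n : ℕ) : (σ n).length = codeLength c n := by
    induction n with
    | zero => rfl
    | succ n ih => rw [(hext n).2, ih, codeLength]
  obtain ⟨A, hA⟩ := exists_forall_mem_cyl (fun n => (hext n).1)
    fun n => (le_codeLength c n).trans (hlen n).ge
  have hpre (n : ℕ) : pre A (codeLength c n) = σ n := hlen n ▸ hA n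
  exact ⟨A, fun n => by simpa only [hpre] using ⟨hthick n, hcodes n⟩⟩

theorem mem_paths_of_frequently_thick {A : Seq}
    (h : ∀ n, ∃ l ≥ n, ∃ m, Thick μ (paths T) m (pre A l)) : A ∈ paths T := by
  intro n
  obtain ⟨l, hl, m, hthick⟩ := h n
  obtain ⟨X, hX, hXT⟩ := hthick.inter_nonempty
  have hmem := hXT (pre A l).length
  rw [show pre X (pre A l).length = pre A l from hX] at hmem
  exact Tree.mem_of_prefix (pre_prefix_pre A hl) hmem

theorem exists_partrec_eq_some {α : Type*} [Primcodable α] {R : Bool → α → ℕ → Prop}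
    (hR : ∀ b, PrimrecRel (R b)) : ∃ g : α →. Bool, Partrec g ∧
      ∀ a b, (∃ k, R b a k) → (∀ k, ¬R (!b) a k) → g a = Part.some b := by
  have hor : PrimrecRel fun a k => R false a k ∨ R true a k := (hR false).or (hR true)
  refine ⟨fun a => (Nat.rfind fun k => Part.some (decide (R false a k ∨ R true a k))).map
    fun k => decide (R true a k), (Partrec.rfind hor.decide.to_comp.partrec₂).map
      (hR true).decide.to_comp, fun a b ⟨k, hk⟩ hnot => ?_⟩
  have hdom : (Nat.rfind fun k => Part.some (decide (R false a k ∨ R true a k))).Dom :=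
    Nat.rfind_dom.2 ⟨k, by cases b <;> simp [hk], fun _ => trivial⟩
  obtain ⟨j, hj⟩ := Part.dom_iff_mem.1 hdom
  have hspec : R false a j ∨ R true a j := by simpa using Nat.rfind_spec hj
  have hj' : ¬R (!b) a j := hnot j
  refine Part.eq_some_iff.2 ((Part.mem_map_iff _).2 ⟨j, hj, ?_⟩)
  cases b <;> simp_all

theorem exists_computable_partrec_forall_exists_mem_paths (hμ : FairCoin μ)
    (hT : PrimrecPred (· ∈ T)) (hpos : μ (paths T) ≠ 0) :
    ∃ f : ℕ → ℕ, Computable f ∧ ∃ g : Str × ℕ →. Bool, Partrec g ∧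
      ∀ B : Seq, ∃ A ∈ paths T, ∀ n, g (pre A (f n), n) = Part.some (B n) := by
  have := hμ.isProbabilityMeasure
  obtain ⟨c, hc⟩ := exists_thick_nil hpos
  have hsettled (b : Bool) : PrimrecRel fun (q : Str × ℕ) k =>
      Settled μ T (c + q.2) b (q.1.take (codeLength c q.2)) q.1 k := by
    have hn : Primrec fun q : (Str × ℕ) × ℕ => q.1.2 := Primrec.snd.comp Primrec.fst
    have hw : Primrec fun q : (Str × ℕ) × ℕ => q.1.1 := Primrec.fst.comp Primrec.fst
    exact primrecPred_settled hμ hT b (Primrec.nat_add.comp (Primrec.const c) hn)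
      (Primrec.list_take.comp ((primrec_codeLength c).comp hn) hw) hw Primrec.snd
  obtain ⟨g, hg, hdecode⟩ := exists_partrec_eq_some hsettled
  refine ⟨fun n => codeLength c (n + 1), ((primrec_codeLength c).comp Primrec.succ).to_comp,
    g, hg, fun B => ?_⟩
  obtain ⟨A, hA⟩ := exists_seq_codes hμ hc B
  refine ⟨A, mem_paths_of_frequently_thick (μ := μ) fun n =>
    ⟨_, le_codeLength c n, _, (hA n).1⟩, fun n => ?_⟩
  have htake : (pre A (codeLength c (n + 1))).take (codeLength c n) = pre A (codeLength c n) :=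
    take_pre A (Nat.le_add_right _ _)
  refine hdecode _ _ ?_ ?_ <;> simp only [htake]
  · exact (hA n).2.exists_settled
  · exact (hA n).2.not_settled_not hμ (hA n).1

end Coding

section TuringReducibility

namespace RecIn

variable {O : ℕ →. ℕ}

theorem of_partrec {f : ℕ →. ℕ} (hf : Nat.Partrec f) : RecIn O f := by
  induction hf with
  | zero => exact .zero
  | succ => exact .succ
  | left => exact .left
  | right => exact .right
  | pair _ _ ih₁ ih₂ => exact .pair ih₁ ih₂
  | comp _ _ ih₁ ih₂ => exact .comp ih₁ ih₂
  | prec _ _ ih₁ ih₂ => exact .prec ih₁ ih₂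
  | rfind _ ih => exact .rfind ih

theorem of_computable {f : ℕ → ℕ} (hf : Computable f) : RecIn O f :=
  of_partrec (Partrec.nat_iff.1 hf)

theorem of_eq {f g : ℕ →. ℕ} (hf : RecIn O f) (h : ∀ n, f n = g n) : RecIn O g :=
  (funext h : f = g) ▸ hf

theorem comp_total {f : ℕ →. ℕ} {g : ℕ → ℕ} (hf : RecIn O f) (hg : RecIn O g) :
    RecIn O fun n => f (g n) :=
  (hf.comp hg).of_eq fun _ => Part.bind_some _ _

theorem pair_total {f g : ℕ → ℕ} (hf : RecIn O f) (hg : RecIn O g) :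
    RecIn O fun n => Part.some (Nat.pair (f n) (g n)) :=
  (hf.pair hg).of_eq fun _ => by simp [Seq.seq]

theorem nat_rec {g : ℕ → ℕ} (hg : RecIn O g) (x : ℕ) :
    RecIn O fun n => Part.some (n.rec x fun y ih => g (Nat.pair y ih)) := by
  have hbase : RecIn O fun _ => Part.some x := of_computable (Computable.const x)
  have hstep : RecIn O fun q => Part.some (g q.unpair.2) :=
    comp_total (g := fun q => q.unpair.2) hg .right
  refine (comp_total (g := fun n => Nat.pair 0 n) (hbase.prec hstep)
    (of_computable (Primrec₂.natPair.comp (Primrec.const 0) Primrec.id).to_comp)).of_eq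
    fun n => ?_
  simp only [Nat.unpaired, Nat.unpair_pair]
  induction n with
  | zero => rfl
  | succ n ih => exact (congrArg (· >>= _) ih).trans (Part.bind_some _ _)

end RecIn

/-- Appends the bit `p.2 = 1` to the string with code `p.1`. -/
def appendBit (p : ℕ × ℕ) : ℕ :=
  Encodable.encode ((Encodable.decode (α := Str) p.1).getD [] ++ [decide (p.2 = 1)])

theorem primrec_appendBit : Primrec appendBit := by
  refine Primrec.encode.comp (Primrec.list_concat.comp ?_ ?_)
  · exact Primrec.option_getD.comp (Primrec.decode.comp Primrec.fst) (Primrec.const [])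
  · exact PrimrecPred.decide (Primrec.eq.comp Primrec.snd (Primrec.const 1))

theorem encode_pre_succ (A : Seq) (n : ℕ) :
    Encodable.encode (pre A (n + 1)) =
      appendBit (Encodable.encode (pre A n), cond (A n) 1 0) := by
  cases h : A n <;> simp [appendBit, pre_succ, h]

theorem recIn_encode_pre (A : Seq) :
    RecIn (oracleOf A) fun n => Part.some (Encodable.encode (pre A n)) := by
  let bit (q : ℕ) : ℕ := cond (A q.unpair.1) 1 0
  have hbit : RecIn (oracleOf A) bit := RecIn.comp_total (f := oracleOf A) .oracle .left
  have hstep : RecIn (oracleOf A) fun q => Part.some (appendBit (q.unpair.2, bit q)) :=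
    ((RecIn.of_computable (primrec_appendBit.comp Primrec.unpair).to_comp).comp_total
      (RecIn.pair_total .right hbit)).of_eq fun q => by simp
  refine (RecIn.nat_rec hstep (Encodable.encode (pre A 0))).of_eq fun n => congrArg Part.some ?_
  induction n with
  | zero => rfl
  | succ n ih => simp only [encode_pre_succ, ← ih, bit, Nat.unpair_pair]

theorem seqTuringLE_of_wtt {A B : Seq} {f : ℕ → ℕ} (hf : Computable f) {g : Str × ℕ →. Bool}
    (hg : Partrec g) (h : ∀ n, g (pre A (f n), n) = Part.some (B n)) : SeqTuringLE B A := by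
  have hquery : RecIn (oracleOf A) fun n => Part.some (Encodable.encode (pre A (f n))) :=
    (recIn_encode_pre A).comp_total (.of_computable hf)
  refine ((RecIn.of_partrec hg).comp_total
    (RecIn.pair_total hquery (.of_computable Computable.id))).of_eq fun n => ?_
  have hpair : Nat.pair (Encodable.encode (pre A (f n))) n =
      Encodable.encode (pre A (f n), n) := rfl
  simp only [id_eq, hpair, Encodable.encodek, Part.coe_some, Part.bind_some, h, Part.map_some,
    oracleOf]
  cases B n <;> rfl

end TuringReducibility

/-- **Kučera–Gács theorem**: every `B ∈ 2^ω` is computable from some Martin-Löf random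
`A`; moreover (Gács) the reduction may be taken to be a wtt-reduction: there are a
computable bound `f` and a partial computable functional `g` computing `B(n)` from
the first `f(n)` bits of `A`. -/
theorem kucera_gacs (μ : MeasureTheory.Measure Seq) (hμ : FairCoin μ) (B : Seq) :
    ∃ A : Seq, MLRandom μ A ∧ SeqTuringLE B A ∧
      ∃ f : ℕ → ℕ, Computable f ∧
        ∃ g : Str × ℕ →. Bool, Partrec g ∧
          ∀ n : ℕ, g (pre A (f n), n) = Part.some (B n) := by
  have := hμ.isProbabilityMeasure
  obtain ⟨f, hf, g, hg, hcode⟩ := exists_computable_partrec_forall_exists_mem_paths hμ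
    (primrecPred_mem_randomTree hμ) measure_paths_randomTree_ne_zero
  obtain ⟨A, hA, hAB⟩ := hcode B
  exact ⟨A, mlRandom_of_mem_paths_randomTree hA, seqTuringLE_of_wtt hf hg hAB, f, hf, g, hg, hAB⟩

end AR
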